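/- arXiv:1910.10976 — 3 statements merged into one kernel-verified Lean document; each statement's English description precedes it below -/
import Mathlib

section
/- Let A ∈ ℝ^{m×n} satisfy the RIP of order K+1 with constant δ ∈ [0,1). Let x ∈ ℝ^n be K-sparse with support S = supp(x), let S' be a proper subset of S, set r = P_{S'}^⊥ A x, let j ∈ {1,…,n} \ S with P_{S'}^⊥ a_j ≠ 0, and put t = ‖x_{S\S'}‖₂ · |⟨r, a_j⟩| / ‖P_{S'}^⊥ a_j‖₂. Then ‖r‖₂² + 2t ≤ (1 + (1 + ‖P_{S'}^⊥ a_j‖₂²)·δ) · ‖x_{S\S'}‖₂² / ‖P_{S'}^⊥ a_j‖₂². -/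
open Finset

noncomputable section

/-- The support of a vector as a `Finset`. -/
def vsupp {n : ℕ} (x : Fin n → ℝ) : Finset (Fin n) :=
  Finset.univ.filter (fun i => x i ≠ 0)

/-- `A` satisfies the restricted isometry property of order `r` with constant `δ`. -/
def RIP {m n : ℕ} (A : Matrix (Fin m) (Fin n) ℝ) (r : ℕ) (δ : ℝ) : Prop :=
  ∀ x : Fin n → ℝ, (vsupp x).card ≤ r →
    (1 - δ) * (∑ i, x i ^ 2) ≤ (∑ i, (A.mulVec x) i ^ 2) ∧
      (∑ i, (A.mulVec x) i ^ 2) ≤ (1 + δ) * (∑ i, x i ^ 2)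

/-- The `j`-th column of `A`. -/
def col {m n : ℕ} (A : Matrix (Fin m) (Fin n) ℝ) (j : Fin n) : Fin m → ℝ :=
  fun i => A i j

/-- Euclidean dot product. -/
def dot {m : ℕ} (u v : Fin m → ℝ) : ℝ := ∑ i, u i * v i

/-- Squared Euclidean norm. -/
def nsq {m : ℕ} (v : Fin m → ℝ) : ℝ := ∑ i, v i ^ 2

/-- Euclidean norm. -/
def enorm {m : ℕ} (v : Fin m → ℝ) : ℝ := Real.sqrt (nsq v)

/-- Squared norm of the restriction of `x` to `T`. -/
def rsq {n : ℕ} (x : Fin n → ℝ) (T : Finset (Fin n)) : ℝ := ∑ i ∈ T, x i ^ 2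

/-- Norm of the restriction of `x` to `T`. -/
def rnorm {n : ℕ} (x : Fin n → ℝ) (T : Finset (Fin n)) : ℝ := Real.sqrt (rsq x T)

/-- Span of the columns of `A` indexed by `J`. -/
def colSpan {m n : ℕ} (A : Matrix (Fin m) (Fin n) ℝ) (J : Finset (Fin n)) :
    Submodule ℝ (EuclideanSpace ℝ (Fin m)) :=
  Submodule.span ℝ ((fun j => (WithLp.equiv 2 (Fin m → ℝ)).symm (col A j)) '' (J : Set (Fin n)))

/-- The projection `P_J^⊥ v` of `v` onto the orthogonal complement of the span of the
columns of `A` indexed by `J`. -/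
def projPerp {m n : ℕ} (A : Matrix (Fin m) (Fin n) ℝ) (J : Finset (Fin n)) (v : Fin m → ℝ) :
    Fin m → ℝ :=
  v - WithLp.equiv 2 (Fin m → ℝ)
    ((Submodule.orthogonalProjectionOnto (colSpan A J) ((WithLp.equiv 2 (Fin m → ℝ)).symm v) :
      EuclideanSpace ℝ (Fin m)))

/-- The OLS selection criterion value for index `j`, given measurements `y` and current
estimated support `Sk`. -/
def olsQuot {m n : ℕ} (A : Matrix (Fin m) (Fin n) ℝ) (y : Fin m → ℝ) (Sk : Finset (Fin n))
    (j : Fin n) : ℝ :=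
  |dot (projPerp A Sk y) (col A j)| / _root_.enorm (projPerp A Sk (col A j))

/-- The estimated support of OLS after `k` iterations (ties broken towards smaller index). -/
def olsSupp {m n : ℕ} (A : Matrix (Fin m) (Fin n) ℝ) (y : Fin m → ℝ) : ℕ → Finset (Fin n)
  | 0 => ∅
  | k + 1 =>
    let Sk := olsSupp A y k
    let cand := (Finset.univ \ Sk).filter
      (fun j => ∀ i ∈ Finset.univ \ Sk, olsQuot A y Sk i ≤ olsQuot A y Sk j)
    if h : cand.Nonempty then insert (cand.min' h) Sk else Sk

/-- The constant `C_K` from the paper. -/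
def CK (K : ℕ) : ℝ :=
  if K = 1 then 1 else if K = 2 then 2/3 else if K = 3 then 4/7 else 1 / Real.sqrt K

lemma nsq_eq {m : ℕ} (v : Fin m → ℝ) : nsq v = ‖WithLp.toLp 2 v‖ ^ 2 := by
  rw [EuclideanSpace.real_norm_sq_eq]; rfl

lemma dot_eq {m : ℕ} (u v : Fin m → ℝ) :
    dot u v = inner ℝ (WithLp.toLp 2 u) (WithLp.toLp 2 v) := by
  simp [dot, PiLp.inner_apply, mul_comm]

lemma toLp_projPerp {m n : ℕ} (A : Matrix (Fin m) (Fin n) ℝ) (J : Finset (Fin n))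
    (v : Fin m → ℝ) : WithLp.toLp 2 (projPerp A J v) =
      WithLp.toLp 2 v - (colSpan A J).starProjection (WithLp.toLp 2 v) := by
  rfl

lemma projPerp_add {m n : ℕ} (A : Matrix (Fin m) (Fin n) ℝ) (J : Finset (Fin n))
    (u v : Fin m → ℝ) : projPerp A J (u + v) = projPerp A J u + projPerp A J v := by
  apply WithLp.toLp_injective 2
  rw [WithLp.toLp_add, toLp_projPerp, toLp_projPerp, toLp_projPerp, WithLp.toLp_add, map_add]
  abel

lemma projPerp_smul {m n : ℕ} (A : Matrix (Fin m) (Fin n) ℝ) (J : Finset (Fin n))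
    (c : ℝ) (v : Fin m → ℝ) : projPerp A J (c • v) = c • projPerp A J v := by
  apply WithLp.toLp_injective 2
  rw [WithLp.toLp_smul, toLp_projPerp, toLp_projPerp, WithLp.toLp_smul, map_smul, smul_sub]

lemma nsq_projPerp_le {m n : ℕ} (A : Matrix (Fin m) (Fin n) ℝ) (J : Finset (Fin n))
    (v : Fin m → ℝ) : nsq (projPerp A J v) ≤ nsq v := by
  rw [nsq_eq, nsq_eq, toLp_projPerp]
  gcongr
  rw [← Submodule.starProjection_orthogonal_val]
  exact Submodule.norm_starProjection_apply_le _ _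

lemma projPerp_mulVec {m n : ℕ} (A : Matrix (Fin m) (Fin n) ℝ) (J : Finset (Fin n))
    (w : Fin n → ℝ) (hw : ∀ i, i ∉ J → w i = 0) : projPerp A J (A.mulVec w) = 0 := by
  apply WithLp.toLp_injective 2
  rw [toLp_projPerp, WithLp.toLp_zero, sub_eq_zero, eq_comm,
    Submodule.starProjection_eq_self_iff]
  have h : WithLp.toLp 2 (A.mulVec w) = ∑ i, w i • WithLp.toLp 2 (col A i) := by
    ext k
    simp [Matrix.mulVec, dotProduct, col, mul_comm]
  rw [h]
  refine Submodule.sum_mem _ fun i _ => ?_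
  by_cases hi : i ∈ J
  · exact Submodule.smul_mem _ _ (Submodule.subset_span ⟨i, hi, rfl⟩)
  · simp [hw i hi]

lemma dot_projPerp {m n : ℕ} (A : Matrix (Fin m) (Fin n) ℝ) (J : Finset (Fin n))
    (u v : Fin m → ℝ) : dot (projPerp A J u) v = dot (projPerp A J u) (projPerp A J v) := by
  rw [dot_eq, dot_eq, toLp_projPerp A J v, inner_sub_right, toLp_projPerp]
  rw [Submodule.starProjection_inner_eq_zero _ _ (Submodule.starProjection_apply_mem _ _), sub_zero]

lemma key {m n K : ℕ} (A : Matrix (Fin m) (Fin n) ℝ) (δ : ℝ)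
    (hRIP : RIP A (K + 1) δ)
    (x : Fin n → ℝ) (S : Finset (Fin n)) (hS : vsupp x = S) (hK : S.card ≤ K)
    (S' : Finset (Fin n)) (j : Fin n) (hj : j ∉ S) (s : ℝ) :
    nsq (projPerp A S' (A.mulVec x)) + 2 * s * dot (projPerp A S' (A.mulVec x)) (col A j)
      + s ^ 2 * nsq (projPerp A S' (col A j)) ≤ (1 + δ) * (rsq x (S \ S') + s ^ 2) := by
  have hx : ∀ i, i ∉ S → x i = 0 := by
    intro i hi
    by_contra h
    exact hi (hS ▸ by simp [vsupp, h])
  let w : Fin n → ℝ := fun i => if i ∈ S' then x i else 0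
  let y : Fin n → ℝ := fun i => if i ∈ S \ S' then x i else 0
  let z : Fin n → ℝ := y + s • Pi.single j 1
  have hxy : x = w + y := by
    funext i
    by_cases h1 : i ∈ S' <;> by_cases h2 : i ∈ S <;> simp [w, y, h1, h2, hx]
  have hyj : y j = 0 := by simp [y, hj]
  have hAj : A.mulVec (Pi.single j 1) = col A j := by
    ext k; simp [col]
  have hr : projPerp A S' (A.mulVec x) = projPerp A S' (A.mulVec y) := by
    rw [hxy, Matrix.mulVec_add, projPerp_add, projPerp_mulVec A S' w, zero_add]
    intro i hi; simp [w, hi]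
  have hz : projPerp A S' (A.mulVec z) =
      projPerp A S' (A.mulVec x) + s • projPerp A S' (col A j) := by
    rw [hr, Matrix.mulVec_add, Matrix.mulVec_smul, hAj, projPerp_add, projPerp_smul]
  have hcard : (vsupp z).card ≤ K + 1 := by
    have : vsupp z ⊆ insert j S := by
      intro i hi
      by_contra h
      simp only [Finset.mem_insert, not_or] at h
      simp [vsupp, z, y, h.1, h.2] at hi
    exact (Finset.card_le_card this).trans ((Finset.card_insert_le _ _).trans (by omega))
  have hzz : ∑ i, z i ^ 2 = rsq x (S \ S') + s ^ 2 := by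
    have h1 : ∀ i, z i ^ 2 = (if i ∈ S \ S' then x i ^ 2 else 0) + if i = j then s ^ 2 else 0 := by
      intro i
      by_cases h : i = j
      · subst h; simp [z, y, hj]
      · simp only [z, y, Pi.add_apply, Pi.smul_apply, Pi.single_eq_of_ne h, h, if_false]
        split_ifs <;> simp
    rw [Finset.sum_congr rfl fun i _ => h1 i, Finset.sum_add_distrib]
    simp [rsq, Finset.sum_ite_mem, -Finset.mem_sdiff]
  have h := (hRIP z hcard).2
  rw [hzz] at h
  have h2 := (nsq_projPerp_le A S' (A.mulVec z)).trans h
  rw [hz] at h2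
  rw [dot_projPerp]
  refine le_trans (le_of_eq ?_) h2
  simp only [nsq, dot, Finset.mul_sum, ← Finset.sum_add_distrib]
  refine Finset.sum_congr rfl fun i _ => ?_
  simp
  ring

/-- under RIP of order `K+1` with `δ ∈ [0,1)`, with
`t = ‖x_{S\S'}‖₂ |⟨r, a_j⟩| / ‖P_{S'}^⊥ a_j‖₂`, one has
`‖r‖₂² + 2t ≤ (1 + (1 + ‖P_{S'}^⊥ a_j‖₂²) δ) ‖x_{S\S'}‖₂² / ‖P_{S'}^⊥ a_j‖₂²`. -/
theorem stmt3 {m n K : ℕ} (A : Matrix (Fin m) (Fin n) ℝ) (δ : ℝ)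
    (hδ0 : 0 ≤ δ) (hδ1 : δ < 1)
    (hRIP : RIP A (K + 1) δ)
    (x : Fin n → ℝ) (S : Finset (Fin n)) (hS : vsupp x = S) (hK : S.card ≤ K)
    (S' : Finset (Fin n)) (hS' : S' ⊂ S)
    (r : Fin m → ℝ) (hr : r = projPerp A S' (A.mulVec x))
    (j : Fin n) (hj : j ∉ S) (hproj : projPerp A S' (col A j) ≠ 0)
    (t : ℝ) (ht : t = rnorm x (S \ S') * |dot r (col A j)| / _root_.enorm (projPerp A S' (col A j))) :
    nsq r + 2 * t ≤
      (1 + (1 + nsq (projPerp A S' (col A j))) * δ) * rsq x (S \ S') /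
        nsq (projPerp A S' (col A j)) := by
  subst hr
  set b := projPerp A S' (col A j) with hb
  have hp : 0 < nsq b := by
    rw [nsq_eq]
    have : WithLp.toLp 2 b ≠ 0 := by
      intro h; exact hproj (WithLp.toLp_injective 2 h)
    positivity
  set X := rnorm x (S \ S') with hX
  have hX2 : X ^ 2 = rsq x (S \ S') :=
    Real.sq_sqrt (Finset.sum_nonneg fun i _ => sq_nonneg _)
  set p := _root_.enorm b with hpd
  have hp2 : p ^ 2 = nsq b := Real.sq_sqrt hp.le
  have hp0 : 0 < p := Real.sqrt_pos.2 hp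
  set d := dot (projPerp A S' (A.mulVec x)) (col A j) with hd
  have main : ∀ s : ℝ, s ^ 2 = (X / p) ^ 2 → s * d = t →
      nsq (projPerp A S' (A.mulVec x)) + 2 * t ≤
      (1 + (1 + nsq b) * δ) * rsq x (S \ S') / nsq b := by
    intro s hs hst
    have h := key A δ hRIP x S hS hK S' j hj s
    rw [← hb, ← hd, mul_assoc, hst, hs, ← hX2, ← hp2] at h
    rw [← hX2, ← hp2]
    have e1 : (X / p) ^ 2 * p ^ 2 = X ^ 2 := by field_simp
    have e2 : (1 + (1 + p ^ 2) * δ) * X ^ 2 / p ^ 2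
        = (1 + δ) * (X ^ 2 + (X / p) ^ 2) - X ^ 2 := by field_simp; ring
    rw [e2]; linarith
  rcases abs_cases d with ⟨h, _⟩ | ⟨h, _⟩
  · exact main (X / p) rfl (by rw [ht, h]; ring)
  · exact main (-(X / p)) (by ring) (by rw [ht, h]; ring)
end
end

section
/- Fix K ∈ {2, 3} and let C_2 = 2/3, C_3 = 4/7. Let A ∈ ℝ^{m×n} have unit ℓ₂-norm columns and satisfy the RIP of order K+1 with constant δ < C_K. Let x ∈ ℝ^n be K-sparse with support S = supp(x), let S' be a proper subset of S with |S'| = k, set r = P_{S'}^⊥ A x, and let j ∈ {1,…,n} \ S. Then √(K−k) · ‖x_{S\S'}‖₂ · |⟨r, a_j⟩| / ‖P_{S'}^⊥ a_j‖₂ < ‖r‖₂². -/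
open Finset

noncomputable section

theorem projPerp_spec {m n : ℕ} (A : Matrix (Fin m) (Fin n) ℝ) (J : Finset (Fin n))
    (v : Fin m → ℝ) :
    (∃ w : Fin n → ℝ, (∀ i, i ∉ J → w i = 0) ∧ projPerp A J v = v - A.mulVec w) ∧
      ∀ w : Fin n → ℝ, (∀ i, i ∉ J → w i = 0) → dot (projPerp A J v) (A.mulVec w) = 0 := by
  constructor
  · have hm := (Submodule.orthogonalProjectionOnto (colSpan A J)
      ((WithLp.equiv 2 (Fin m → ℝ)).symm v)).2
    unfold colSpan at hm
    rw [Submodule.mem_span_image_finset_iff_exists_fun] at hm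
    obtain ⟨c, hc⟩ := hm
    refine ⟨fun i => if h : i ∈ J then c ⟨i, h⟩ else 0, fun i hi => by simp [hi], ?_⟩
    unfold projPerp
    congr 1
    have : ((Submodule.orthogonalProjectionOnto (colSpan A J)
      ((WithLp.equiv 2 (Fin m → ℝ)).symm v) : EuclideanSpace ℝ (Fin m))) =
      ∑ i : J, c i • (WithLp.equiv 2 (Fin m → ℝ)).symm (col A i) := hc.symm
    rw [this]
    ext l
    simp only [Matrix.mulVec, dotProduct]
    rw [← Finset.sum_subset (Finset.subset_univ J) (fun i _ hi => by simp [hi]),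
      ← Finset.sum_coe_sort J]
    simp [col, mul_comm]
  · intro w hw
    have key : ∀ i ∈ J, dot (projPerp A J v) (col A i) = 0 := by
      intro i hi
      have hmem : (WithLp.equiv 2 (Fin m → ℝ)).symm (col A i) ∈ colSpan A J :=
        Submodule.subset_span ⟨i, hi, rfl⟩
      have h := Submodule.sub_starProjection_mem_orthogonal (K := colSpan A J)
        ((WithLp.equiv 2 (Fin m → ℝ)).symm v)
      rw [Submodule.mem_orthogonal] at h
      have h2 := h _ hmem
      rw [PiLp.inner_apply] at h2
      unfold dot projPerp
      rw [← h2]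
      apply Finset.sum_congr rfl
      intro l _
      simp
    have : dot (projPerp A J v) (A.mulVec w) =
        ∑ i, w i * dot (projPerp A J v) (col A i) := by
      simp only [dot, Matrix.mulVec, dotProduct, Finset.mul_sum, col]
      rw [Finset.sum_comm]
      refine Finset.sum_congr rfl fun _ _ => Finset.sum_congr rfl fun _ _ => by ring
    rw [this]
    refine Finset.sum_eq_zero fun i _ => ?_
    by_cases hi : i ∈ J
    · rw [key i hi, mul_zero]
    · rw [hw i hi, zero_mul]

theorem nsq_add_smul {m : ℕ} (u v : Fin m → ℝ) (s : ℝ) :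
    nsq (u + s • v) = nsq u + 2 * s * dot u v + s ^ 2 * nsq v := by
  simp only [nsq, dot, Finset.mul_sum, ← Finset.sum_add_distrib]
  refine Finset.sum_congr rfl fun _ _ => ?_
  simp only [Pi.add_apply, Pi.smul_apply, smul_eq_mul]
  ring

theorem nsq_nonneg {m : ℕ} (u : Fin m → ℝ) : 0 ≤ nsq u :=
  Finset.sum_nonneg fun _ _ => sq_nonneg _

theorem dot_sub_right {m : ℕ} (u v w : Fin m → ℝ) : dot u (v - w) = dot u v - dot u w := by
  simp only [dot, Pi.sub_apply, mul_sub, Finset.sum_sub_distrib]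

theorem final_ineq (L δ X R B g : ℝ) (hL : 0 ≤ L) (hδ0 : 0 ≤ δ) (hδ : δ * (4 + L) < 4)
    (hδ1 : δ < 1) (hX : 0 < X) (hB : 1 - δ ≤ B) (hB1 : B ≤ 1) (hR : (1 - δ) * X ≤ R)
    (hg : g ^ 2 ≤ (B - (1 - δ)) * (R - (1 - δ) * X)) :
    Real.sqrt L * Real.sqrt X * |g| / Real.sqrt B < R := by
  have hBp : 0 < B := by linarith
  have hRp : 0 < R := lt_of_lt_of_le (mul_pos (by linarith) hX) hR
  rw [div_lt_iff₀ (Real.sqrt_pos.2 hBp)]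
  apply lt_of_pow_lt_pow_left₀ 2 (by positivity)
  rw [mul_pow, mul_pow, mul_pow, Real.sq_sqrt hL, Real.sq_sqrt hX.le, Real.sq_sqrt hBp.le, sq_abs]
  have h1 : g ^ 2 ≤ (δ * B) * (R - (1 - δ) * X) := by
    refine hg.trans (mul_le_mul_of_nonneg_right ?_ (by linarith))
    nlinarith
  have h2 : L * X * g ^ 2 ≤ L * X * ((δ * B) * (R - (1 - δ) * X)) :=
    mul_le_mul_of_nonneg_left h1 (by positivity)
  have h3 : L * X * (δ * (R - (1 - δ) * X)) < R ^ 2 := by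
    rcases (mul_nonneg hL hδ0).eq_or_lt with h0 | h0
    · have : L * X * (δ * (R - (1 - δ) * X)) = (L * δ) * (X * (R - (1 - δ) * X)) := by ring
      rw [this, ← h0]
      simp only [zero_mul]
      positivity
    · have e : 0 < (L * δ) * X ^ 2 * (4 - δ * (4 + L)) :=
        mul_pos (mul_pos h0 (by positivity)) (by linarith)
      nlinarith [sq_nonneg (2 * R - L * δ * X)]
  nlinarith

/-- for `K ∈ {2,3}`, unit-norm columns and RIP of order `K+1` with
`δ < C_K` (`C_2 = 2/3`, `C_3 = 4/7`), for `j ∉ S`,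
`√(K−k) ‖x_{S\S'}‖₂ |⟨r, a_j⟩| / ‖P_{S'}^⊥ a_j‖₂ < ‖r‖₂²` where `k = |S'|`. -/
theorem stmt10 {m n : ℕ} (K : ℕ) (hK : K = 2 ∨ K = 3) (A : Matrix (Fin m) (Fin n) ℝ) (δ : ℝ)
    (hδ0 : 0 ≤ δ) (hδ : δ < CK K)
    (hcols : ∀ j, nsq (col A j) = 1)
    (hRIP : RIP A (K + 1) δ)
    (x : Fin n → ℝ) (S : Finset (Fin n)) (hS : vsupp x = S) (hKs : S.card ≤ K)
    (S' : Finset (Fin n)) (hS' : S' ⊂ S) (k : ℕ) (hk : S'.card = k)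
    (r : Fin m → ℝ) (hr : r = projPerp A S' (A.mulVec x))
    (j : Fin n) (hj : j ∉ S) :
    Real.sqrt ((K : ℝ) - (k : ℝ)) * rnorm x (S \ S') * |dot r (col A j)| /
      _root_.enorm (projPerp A S' (col A j)) < nsq r := by
  have hCK : δ * (4 + (K : ℝ)) < 4 ∧ δ < 1 := by
    rcases hK with rfl | rfl
    · norm_num [CK] at hδ ⊢
      constructor <;> linarith
    · norm_num [CK] at hδ ⊢
      constructor <;> linarith
  have hkS : k < S.card := hk ▸ Finset.card_lt_card hS'
  have hkK : (k : ℝ) ≤ K := by exact_mod_cast (hkS.le.trans hKs)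
  have hk0 : (0 : ℝ) ≤ k := by positivity
  have hx0 : ∀ i, i ∉ S → x i = 0 := by
    intro i hi
    rw [← hS] at hi
    simpa [vsupp] using hi
  have hjS' : j ∉ S' := fun h => hj (hS'.1 h)
  obtain ⟨⟨w1, hw1, hr1⟩, ho1⟩ := projPerp_spec A S' (A.mulVec x)
  obtain ⟨⟨w2, hw2, hr2⟩, ho2⟩ := projPerp_spec A S' (col A j)
  rw [← hr] at hr1 ho1
  set b := projPerp A S' (col A j) with hb
  have hdot : dot r (col A j) = dot r b := by
    rw [hr2, dot_sub_right, ho1 w2 hw2, sub_zero]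
  have hB1 : nsq b ≤ 1 := by
    have h1 : col A j = b + (1 : ℝ) • A.mulVec w2 := by rw [hr2]; simp
    have h2 := hcols j
    rw [h1, nsq_add_smul, ho2 w2 hw2] at h2
    have := nsq_nonneg (A.mulVec w2)
    linarith
  have hcol : A.mulVec (Pi.single j 1) = col A j := by
    ext l
    simp [col]
  have hgen : ∀ p s : ℝ, (1 - δ) * (p ^ 2 * rsq x (S \ S') + s ^ 2) ≤ nsq (p • r + s • b) := by
    intro p s
    set z : Fin n → ℝ := p • (x - w1) + s • (Pi.single j 1 - w2) with hz
    have hAz : A.mulVec z = p • r + s • b := by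
      rw [hz, Matrix.mulVec_add, Matrix.mulVec_smul, Matrix.mulVec_smul, Matrix.mulVec_sub,
        Matrix.mulVec_sub, hcol, ← hr1, ← hr2]
    have hcard : (vsupp z).card ≤ K + 1 := by
      have hsub : vsupp z ⊆ insert j S := by
        intro i hi
        by_contra hni
        rw [Finset.mem_insert, not_or] at hni
        have hi' : i ∉ S' := fun h => hni.2 (hS'.1 h)
        have : z i = 0 := by
          simp [hz, hx0 i hni.2, hw1 i hi', hw2 i hi', hni.1]
        simp [vsupp, this] at hi
      exact (Finset.card_le_card hsub).trans ((Finset.card_insert_le _ _).trans (by omega))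
    have h := (hRIP z hcard).1
    rw [hAz] at h
    have hjT : j ∉ S \ S' := fun h => hj (Finset.mem_sdiff.1 h).1
    have hsum : p ^ 2 * rsq x (S \ S') + s ^ 2 ≤ ∑ i, z i ^ 2 := by
      calc p ^ 2 * rsq x (S \ S') + s ^ 2 = ∑ i ∈ insert j (S \ S'), z i ^ 2 := by
            rw [Finset.sum_insert hjT, add_comm, rsq, Finset.mul_sum]
            congr 1
            · simp [hz, hx0 j hj, hw1 j hjS', hw2 j hjS']
            · refine Finset.sum_congr rfl fun i hi => ?_
              have hi' := (Finset.mem_sdiff.1 hi).2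
              have hij : i ≠ j := fun h => hjT (h ▸ hi)
              simp [hz, hw1 i hi', hw2 i hi', hij, mul_pow]
        _ ≤ _ := Finset.sum_le_sum_of_subset_of_nonneg (Finset.subset_univ _)
            fun _ _ _ => sq_nonneg _
    exact (mul_le_mul_of_nonneg_left hsum (by linarith [hCK.2])).trans h
  have hX : 0 < rsq x (S \ S') := by
    obtain ⟨i, hi, hi'⟩ := Finset.exists_of_ssubset hS'
    refine Finset.sum_pos' (fun _ _ => sq_nonneg _) ⟨i, Finset.mem_sdiff.2 ⟨hi, hi'⟩, ?_⟩
    rw [← hS] at hi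
    have : x i ≠ 0 := by simpa [vsupp] using hi
    positivity
  have hB : 1 - δ ≤ nsq b := by simpa using hgen 0 1
  have hR : (1 - δ) * rsq x (S \ S') ≤ nsq r := by simpa using hgen 1 0
  have hg : dot r b ^ 2 ≤ (nsq b - (1 - δ)) * (nsq r - (1 - δ) * rsq x (S \ S')) := by
    have := discrim_le_zero (a := nsq b - (1 - δ)) (b := 2 * dot r b)
      (c := nsq r - (1 - δ) * rsq x (S \ S')) (fun s => by
        have h := hgen 1 s
        rw [one_smul, nsq_add_smul] at h
        nlinarith)
    unfold discrim at this
    nlinarith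
  rw [hdot]
  exact final_ineq _ δ _ _ _ _ (by linarith) hδ0 (by nlinarith [hCK.1]) hCK.2 hX hB hB1 hR hg
end
end

section
/- Fix an integer K ≥ 2 and let C_K = 2/3 if K = 2, C_3 = 4/7 if K = 3, and C_K = 1/√K if K ≥ 4. For every δ* ∈ [C_K, 1), there exist dimensions m, n, a matrix A ∈ ℝ^{m×n} with unit ℓ₂-norm columns, and a K-sparse vector x ∈ ℝ^n with 1 ∉ supp(x) such that: (a) A satisfies the RIP of order K+1 with constant δ*, and every δ ∈ [0,1) with which A satisfies the RIP of order K+1 satisfies δ ≥ δ*; and (b) |⟨A x, a_1⟩| ≥ |⟨A x, a_j⟩| for every j ∈ {1,…,n}. In particular, the first iteration of OLS (which, from S⁰ = ∅, selects an index maximizing j ↦ |⟨A x, a_j⟩| and breaks ties in favor of the smallest index) selects the incorrect index 1, so OLS fails to recover x from y = A x in K iterations. -/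
open Finset

noncomputable section

lemma params (K : ℕ) (hK : 2 ≤ K) (δ : ℝ) (hδ1 : CK K ≤ δ) :
    ∃ b c : ℝ, b ≤ 0 ∧ 0 ≤ 1 + ((K:ℝ)-1)*b ∧ 0 < δ ∧ 0 ≤ δ + ((K:ℝ)-1)*b ∧ 0 ≤ c ∧
      c^2 * K = δ * (δ + ((K:ℝ)-1)*b) ∧ 1 + ((K:ℝ)-1)*b ≤ c * K := by
  have key : ∃ b : ℝ, b ≤ 0 ∧ 0 ≤ 1 + ((K:ℝ)-1)*b ∧ 0 < δ ∧ 0 ≤ δ + ((K:ℝ)-1)*b ∧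
      (1 + ((K:ℝ)-1)*b)^2 ≤ K * (δ * (δ + ((K:ℝ)-1)*b)) := by
    unfold CK at hδ1
    split_ifs at hδ1 with h1 h2 h3
    · omega
    · subst h2
      refine ⟨-1/3, by norm_num, by norm_num, by linarith, by norm_num; linarith, ?_⟩
      push_cast
      nlinarith
    · subst h3
      refine ⟨-1/14, by norm_num, by norm_num, by linarith, by norm_num; linarith, ?_⟩
      push_cast
      nlinarith
    · have hK0 : (0:ℝ) < K := by positivity
      have hs : 0 < 1 / Real.sqrt K := by positivity
      have hd : 0 < δ := by linarith
      refine ⟨0, le_refl _, by norm_num, hd, by simpa using hd.le, ?_⟩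
      have h4 : (1 / Real.sqrt K)^2 ≤ δ^2 := by gcongr
      rw [div_pow, Real.sq_sqrt hK0.le, one_pow, div_le_iff₀ hK0] at h4
      nlinarith
  obtain ⟨b, hb, h1, hd, h2, h3⟩ := key
  have hK0 : (0:ℝ) < K := by positivity
  have hc : Real.sqrt (δ * (δ + ((K:ℝ)-1)*b) / K) ^ 2 * K = δ * (δ + ((K:ℝ)-1)*b) := by
    rw [Real.sq_sqrt (by positivity)]
    field_simp
  refine ⟨b, Real.sqrt (δ * (δ + ((K:ℝ)-1)*b) / K), hb, h1, hd, h2, Real.sqrt_nonneg _, hc, ?_⟩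
  refine (abs_le_of_sq_le_sq' ?_ (by positivity)).2
  rw [mul_pow]
  nlinarith

def GM (K : ℕ) (b c : ℝ) : Matrix (Fin (K+1)) (Fin (K+1)) ℝ :=
  Matrix.of fun i j => if i = j then 1 else if i = 0 ∨ j = 0 then c else b

lemma GM_zero (K : ℕ) (b c : ℝ) (z : Fin (K+1) → ℝ) :
    (GM K b c).mulVec z 0 = z 0 + c * ∑ i : Fin K, z i.succ := by
  simp [Matrix.mulVec, dotProduct, GM, Fin.sum_univ_succ, Finset.mul_sum,
    (Fin.succ_ne_zero _).symm]

lemma GM_succ (K : ℕ) (b c : ℝ) (z : Fin (K+1) → ℝ) (k : Fin K) :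
    (GM K b c).mulVec z k.succ = c * z 0 + (1 - b) * z k.succ + b * ∑ i : Fin K, z i.succ := by
  simp only [Matrix.mulVec, dotProduct, GM, Fin.sum_univ_succ, Matrix.of_apply]
  have : ∀ i : Fin K, (if k.succ = i.succ then (1:ℝ) else if k.succ = 0 ∨ i.succ = 0 then c else b)
      * z i.succ = (if k = i then (1 - b) * z i.succ else 0) + b * z i.succ := by
    intro i
    by_cases h : k = i
    · subst h; simp; ring
    · simp [h, Fin.succ_ne_zero]
  rw [Finset.sum_congr rfl (fun i _ => this i), Finset.sum_add_distrib, ← Finset.mul_sum]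
  simp [Fin.succ_ne_zero]
  ring

lemma GM_quad (K : ℕ) (b c : ℝ) (z : Fin (K+1) → ℝ) :
    z ⬝ᵥ (GM K b c).mulVec z = (∑ i, z i ^ 2) + 2 * c * z 0 * (∑ i : Fin K, z i.succ)
      + b * ((∑ i : Fin K, z i.succ)^2 - ∑ i : Fin K, z i.succ ^ 2) := by
  simp only [dotProduct, Fin.sum_univ_succ, GM_zero, GM_succ]
  have : ∀ i : Fin K, z i.succ * (c * z 0 + (1 - b) * z i.succ + b * ∑ i : Fin K, z i.succ)
      = (c * z 0 + b * ∑ i : Fin K, z i.succ) * z i.succ + (1 - b) * z i.succ ^ 2 := by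
    intro i; ring
  rw [Finset.sum_congr rfl (fun i _ => this i), Finset.sum_add_distrib, ← Finset.mul_sum,
    ← Finset.mul_sum]
  ring

lemma GM_bounds (K : ℕ) (hK : 2 ≤ K) (δ b c : ℝ) (hb : b ≤ 0) (hd : 0 < δ)
    (h2 : 0 ≤ δ + ((K:ℝ)-1)*b) (hc : c^2 * K = δ * (δ + ((K:ℝ)-1)*b)) (z : Fin (K+1) → ℝ) :
    (1 - δ) * (∑ i, z i ^ 2) ≤ z ⬝ᵥ (GM K b c).mulVec z ∧
    z ⬝ᵥ (GM K b c).mulVec z ≤ (1 + δ) * (∑ i, z i ^ 2) := by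
  rw [GM_quad, Fin.sum_univ_succ]
  have hcs : (∑ i : Fin K, z i.succ)^2 ≤ K * ∑ i : Fin K, z i.succ ^ 2 := by
    simpa using sq_sum_le_card_mul_sum_sq (s := (Finset.univ : Finset (Fin K)))
      (f := fun i => z i.succ)
  generalize (∑ i : Fin K, z i.succ) = s at *
  generalize (∑ i : Fin K, z i.succ ^ 2) = q at *
  generalize z 0 = w
  have hK2 : (2:ℝ) ≤ K := by exact_mod_cast hK
  generalize (K:ℝ) = k at *
  have hk : 0 < k := by linarith
  obtain ⟨p, hp, rfl⟩ : ∃ p : ℝ, 0 ≤ p ∧ q = s^2 / k + p :=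
    ⟨q - s^2/k, by rw [sub_nonneg, div_le_iff₀ hk]; linarith, by ring⟩
  obtain ⟨v, rfl⟩ : ∃ v, s = k * v := ⟨s / k, by field_simp⟩
  have e1 : (k * v)^2 / k = k * v^2 := by field_simp
  rw [e1]
  have hdb : 0 ≤ δ + b := by nlinarith
  have a1 : 0 ≤ (δ + b) * p := mul_nonneg hdb hp
  have a2 : 0 ≤ (δ - b) * p := mul_nonneg (by linarith) hp
  have a3 : 0 ≤ -(b * ((k - 1) * k * v^2)) := by
    have : 0 ≤ (k - 1) * k * v^2 := mul_nonneg (mul_nonneg (by linarith) hk.le) (sq_nonneg v)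
    nlinarith
  have m1 : 0 ≤ δ * w^2 + 2 * c * w * (k * v) + (δ + (k-1)*b) * k * v^2 := by
    have : 0 ≤ δ * (δ * w^2 + 2 * c * w * (k * v) + (δ + (k-1)*b) * k * v^2) := by
      have : δ * (δ * w^2 + 2 * c * w * (k * v) + (δ + (k-1)*b) * k * v^2)
        = (δ * w + c * (k * v))^2 := by linear_combination -(k * v^2) * hc
      rw [this]; positivity
    exact nonneg_of_mul_nonneg_right this hd
  have m2 : 0 ≤ δ * w^2 - 2 * c * w * (k * v) + (δ + (k-1)*b) * k * v^2 := by
    have : 0 ≤ δ * (δ * w^2 - 2 * c * w * (k * v) + (δ + (k-1)*b) * k * v^2) := by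
      have : δ * (δ * w^2 - 2 * c * w * (k * v) + (δ + (k-1)*b) * k * v^2)
        = (δ * w - c * (k * v))^2 := by linear_combination -(k * v^2) * hc
      rw [this]; positivity
    exact nonneg_of_mul_nonneg_right this hd
  constructor
  · linarith
  · linarith

open scoped MatrixOrder Matrix.Norms.L2Operator in
lemma GM_factor (K : ℕ) (b c : ℝ) (h : ∀ z, 0 ≤ z ⬝ᵥ (GM K b c).mulVec z) :
    ∃ A : Matrix (Fin (K+1)) (Fin (K+1)) ℝ, A.transpose * A = GM K b c := by
  have hp : (GM K b c).PosSemidef := by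
    apply Matrix.PosSemidef.of_dotProduct_mulVec_nonneg
    · ext i j
      simp only [GM, Matrix.conjTranspose_apply, Matrix.of_apply, star_trivial]
      simp only [or_comm (a := j = 0) (b := i = 0)]
      simp only [eq_comm (a := j) (b := i)]
    · intro x; simpa using h x
  obtain ⟨B, hB⟩ := (CStarAlgebra.nonneg_iff_eq_star_mul_self).mp hp.nonneg
  exact ⟨B, by rw [hB]; simp [Matrix.star_eq_conjTranspose]⟩

lemma dot_mulVec {m n : ℕ} (A : Matrix (Fin m) (Fin n) ℝ) (x : Fin n → ℝ) (j : Fin n) :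
    dot (A.mulVec x) (col A j) = (A.transpose * A).mulVec x j := by
  rw [← Matrix.mulVec_mulVec]
  simp [dot, col, Matrix.mulVec, dotProduct, mul_comm]

lemma sum_sq_mulVec {m n : ℕ} (A : Matrix (Fin m) (Fin n) ℝ) (x : Fin n → ℝ) :
    ∑ i, (A.mulVec x) i ^ 2 = x ⬝ᵥ (A.transpose * A).mulVec x := by
  rw [← Matrix.mulVec_mulVec, Matrix.dotProduct_mulVec, Matrix.vecMul_transpose]
  simp [dotProduct, sq]

lemma projPerp_empty {m n : ℕ} (A : Matrix (Fin m) (Fin n) ℝ) (v : Fin m → ℝ) :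
    projPerp A ∅ v = v := by
  have h : colSpan A ∅ = ⊥ := by simp [colSpan]
  have h2 : ((Submodule.orthogonalProjectionOnto (colSpan A ∅)
      ((WithLp.equiv 2 (Fin m → ℝ)).symm v) : EuclideanSpace ℝ (Fin m))) = 0 := by
    have := (Submodule.orthogonalProjectionOnto (colSpan A ∅)
      ((WithLp.equiv 2 (Fin m → ℝ)).symm v)).2
    replace this := h.le this
    exact (Submodule.mem_bot ℝ).1 this
  unfold projPerp
  rw [h2]
  ext i; simp

lemma olsSupp_mono {m n : ℕ} (A : Matrix (Fin m) (Fin n) ℝ) (y : Fin m → ℝ) (k : ℕ) :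
    olsSupp A y k ⊆ olsSupp A y (k+1) := by
  conv_rhs => unfold olsSupp
  dsimp only
  split_ifs
  · exact Finset.subset_insert _ _
  · exact Finset.Subset.refl _

/-- Theorem 2 of the paper: for every `K ≥ 2` and `δ* ∈ [C_K, 1)`, there
exist a unit-column matrix `A` whose RIP constant of order `K+1` is exactly `δ*` and a
`K`-sparse vector `x` such that the first OLS iteration selects an incorrect index `j₀`,
and OLS fails to recover `x` in `K` iterations. -/
theorem stmt12 (K : ℕ) (hK : 2 ≤ K) (δ : ℝ) (hδ1 : CK K ≤ δ) (hδ2 : δ < 1) :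
    ∃ (m n : ℕ) (A : Matrix (Fin m) (Fin n) ℝ) (x : Fin n → ℝ) (j₀ : Fin n),
      (∀ j, nsq (col A j) = 1) ∧
      (vsupp x).card ≤ K ∧
      j₀ ∉ vsupp x ∧
      RIP A (K + 1) δ ∧
      (∀ δ' : ℝ, 0 ≤ δ' → δ' < 1 → RIP A (K + 1) δ' → δ ≤ δ') ∧
      (∀ j, |dot (A.mulVec x) (col A j)| ≤ |dot (A.mulVec x) (col A j₀)|) ∧
      olsSupp A (A.mulVec x) 1 = {j₀} ∧
      olsSupp A (A.mulVec x) K ≠ vsupp x := by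
  obtain ⟨b, c, hb, h1, hd, h2, hc0, hc, hck⟩ := params K hK δ hδ1
  have hbd := GM_bounds K hK δ b c hb hd h2 hc
  obtain ⟨A, hA⟩ := GM_factor K b c (fun z => le_trans
    (mul_nonneg (by linarith) (Finset.sum_nonneg fun i _ => sq_nonneg _)) (hbd z).1)
  have hcol : ∀ j, nsq (col A j) = 1 := by
    intro j
    have : (A.transpose * A) j j = 1 := by rw [hA]; simp [GM]
    rw [← this]
    simp [nsq, col, Matrix.mul_apply, sq]
  set x : Fin (K+1) → ℝ := Fin.cons 0 (fun _ => 1) with hx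
  have hx0 : x 0 = 0 := by simp [hx]
  have hxs : ∀ i : Fin K, x i.succ = 1 := by intro i; simp [hx]
  have hmem : (0 : Fin (K+1)) ∉ vsupp x := by simp [vsupp, hx0]
  have hmax : ∀ j, |dot (A.mulVec x) (col A j)| ≤ |dot (A.mulVec x) (col A 0)| := by
    intro j
    rw [dot_mulVec, dot_mulVec, hA, GM_zero]
    refine Fin.cases ?_ (fun i => ?_) j
    · rw [GM_zero]
    · rw [GM_succ]
      simp only [hx0, hxs, Finset.sum_const, Finset.card_univ, Fintype.card_fin, nsmul_eq_mul]
      rw [abs_of_nonneg (by linarith), abs_of_nonneg (by linarith)]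
      linarith
  have hone : olsSupp A (A.mulVec x) 1 = {0} := by
    have hq : ∀ j, olsQuot A (A.mulVec x) ∅ j = |dot (A.mulVec x) (col A j)| := by
      intro j
      simp [olsQuot, projPerp_empty, _root_.enorm, hcol]
    unfold olsSupp
    dsimp only
    have h0 : (0 : Fin (K+1)) ∈ (Finset.univ \ olsSupp A (A.mulVec x) 0).filter
        (fun j => ∀ i ∈ Finset.univ \ olsSupp A (A.mulVec x) 0,
          olsQuot A (A.mulVec x) (olsSupp A (A.mulVec x) 0) i
            ≤ olsQuot A (A.mulVec x) (olsSupp A (A.mulVec x) 0) j) := by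
      simp only [olsSupp, Finset.mem_filter, hq]
      exact ⟨by simp, fun i _ => hmax i⟩
    have : ∀ (s : Finset (Fin (K+1))) (hs : s.Nonempty), 0 ∈ s → s.min' hs = 0 := by
      intro s hs h
      exact le_antisymm (Finset.min'_le _ _ h) (Fin.zero_le _)
    split_ifs with h
    · rw [this _ h h0]; simp [olsSupp]
    · exact absurd ⟨0, h0⟩ h
  refine ⟨K+1, K+1, A, x, 0, hcol, ?_, hmem, ?_, ?_, hmax, hone, ?_⟩
  · have : (vsupp x).card < (Finset.univ : Finset (Fin (K+1))).card :=
      Finset.card_lt_card ((Finset.ssubset_univ_iff).2 fun h => hmem (h ▸ Finset.mem_univ _))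
    simp at this
    omega
  · intro z _
    rw [sum_sq_mulVec, hA]
    exact hbd z
  · intro δ' _ _ hR
    set z : Fin (K+1) → ℝ := Fin.cons (-(c * K)) (fun _ => δ) with hz
    have := (hR z ((Finset.card_le_univ _).trans (by simp))).1
    rw [sum_sq_mulVec, hA, GM_quad] at this
    have hz0 : z 0 = -(c * K) := by simp [hz]
    have hzs : ∀ i : Fin K, z i.succ = δ := by intro i; simp [hz]
    simp only [Fin.sum_univ_succ, hz0, hzs, Finset.sum_const, Finset.card_univ,
      Fintype.card_fin, nsmul_eq_mul] at this
    have hK0 : (0:ℝ) < K := by positivity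
    have hpos : 0 < (-(c * K))^2 + K * δ^2 := by positivity
    by_contra hlt
    push Not at hlt
    have h5 := mul_pos (sub_pos.2 hlt) hpos
    have h6 : 2 * c * (-(c * K)) * (K * δ) + b * ((K * δ)^2 - K * δ^2)
      = - δ * ((-(c * K))^2 + K * δ^2) := by linear_combination -(K * δ) * hc
    linarith
  · intro h
    have : ∀ k, 1 ≤ k → (0 : Fin (K+1)) ∈ olsSupp A (A.mulVec x) k := by
      intro k hk
      induction k, hk using Nat.le_induction with
      | base => rw [hone]; simp
      | succ k _ ih => exact olsSupp_mono _ _ _ ih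
    exact hmem (h ▸ this K (by omega))
end
end
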